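/- Suppose β ∈ (0,1) and for every p ∈ ℝ^m the map q ↦ Q(q,p) is differentiable on ℝ^m with the operator norm of its derivative at most β at every point q. Then for all q₁, q₂ ∈ ℝ^m there exists a coupling γ of μ(q₁) and μ(q₂) satisfying ∫ ‖x − y‖ dγ(x,y) ≤ β·‖q₁ − q₂‖; in particular W₁(μ(q₁), μ(q₂)) ≤ β·‖q₁ − q₂‖, so the coarse Ricci curvature of the HMC Markov chain is bounded below by 1 − β. -/

import Mathlib

open MeasureTheory

/-- The Wasserstein-1 distance: infimum of `∫ ‖x − y‖ dγ` over couplings `γ` of `μ` and `ν`. -/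
noncomputable def wassersteinW1 {E : Type*} [NormedAddCommGroup E] [MeasurableSpace E]
    (μ ν : Measure E) : ℝ :=
  sInf ((fun γ : Measure (E × E) => ∫ z, ‖z.1 - z.2‖ ∂γ) ''
    {γ : Measure (E × E) | γ.map Prod.fst = μ ∧ γ.map Prod.snd = ν})

/-!
Running both motions with the same momentum `p` ("synchronous coupling") gives the coupling
`p ↦ (Q (q₁, p), Q (q₂, p))` of the two transition laws. By the mean value inequality each
`q ↦ Q (q, p)` is `β`-Lipschitz, so under this coupling the endpoints are at distance at most
`β * ‖q₁ - q₂‖` for every momentum, not merely on average.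
-/

/-- `γ` is a coupling of `μ` and `ν`: a measure on the product with these marginals. As in
`wassersteinW1`, no finiteness is built in; couplings of probability measures are probability
measures because pushforward preserves total mass. -/
def IsCoupling {X Y : Type*} [MeasurableSpace X] [MeasurableSpace Y]
    (γ : Measure (X × Y)) (μ : Measure X) (ν : Measure Y) : Prop :=
  γ.map Prod.fst = μ ∧ γ.map Prod.snd = ν

/-- The one-step HMC transition law `μ(q)` from position `q`, for a momentum distribution `G`.
The momenta may live in a measurable space `P` other than the position space. -/
noncomputable def hmcLaw {E P : Type*} [MeasurableSpace E] [MeasurableSpace P]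
    (Q : E × P → E) (G : Measure P) (q : E) : Measure E :=
  G.map fun p => Q (q, p)

/-- Ollivier's coarse Ricci curvature `κ(x, y)` of the Markov chain with transition laws
`T`. On the diagonal, where it is undefined, division by zero gives the value `1`. -/
noncomputable def coarseRicciCurvature {E : Type*} [NormedAddCommGroup E] [MeasurableSpace E]
    (T : E → Measure E) (x y : E) : ℝ :=
  1 - wassersteinW1 (T x) (T y) / ‖x - y‖

theorem isCoupling_map_prodMk {Ω X Y : Type*} [MeasurableSpace Ω] [MeasurableSpace X]
    [MeasurableSpace Y] {μ : Measure Ω} {f : Ω → X} {g : Ω → Y}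
    (hf : AEMeasurable f μ) (hg : AEMeasurable g μ) :
    IsCoupling (μ.map fun ω => (f ω, g ω)) (μ.map f) (μ.map g) :=
  ⟨Measure.fst_map_prodMk₀ hg, Measure.snd_map_prodMk₀ hf⟩

section Contraction

variable {E : Type*} [NormedAddCommGroup E] [MeasurableSpace E]

theorem IsCoupling.wassersteinW1_le {γ : Measure (E × E)} {μ ν : Measure E}
    (hγ : IsCoupling γ μ ν) : wassersteinW1 μ ν ≤ ∫ z, ‖z.1 - z.2‖ ∂γ := by
  refine csInf_le ⟨0, ?_⟩ ⟨γ, hγ, rfl⟩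
  rintro _ ⟨γ', -, rfl⟩
  exact integral_nonneg fun _ => norm_nonneg _

theorem one_sub_le_coarseRicciCurvature {T : E → Measure E} {x y : E} {c : ℝ} (hxy : x ≠ y)
    (h : wassersteinW1 (T x) (T y) ≤ c * ‖x - y‖) : 1 - c ≤ coarseRicciCurvature T x y :=
  sub_le_sub_left ((div_le_iff₀ (norm_sub_pos_iff.mpr hxy)).mpr h) 1

variable [OpensMeasurableSpace E] [SecondCountableTopology E]

theorem integral_norm_sub_map_prodMk_le {Ω : Type*} [MeasurableSpace Ω] {μ : Measure Ω}
    [IsFiniteMeasure μ] {f g : Ω → E} (hf : AEMeasurable f μ) (hg : AEMeasurable g μ) {C : ℝ}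
    (hC : ∀ᵐ ω ∂μ, ‖f ω - g ω‖ ≤ C) :
    ∫ z, ‖z.1 - z.2‖ ∂(μ.map fun ω => (f ω, g ω)) ≤ C * μ.real Set.univ := by
  have hnorm : Continuous fun z : E × E => ‖z.1 - z.2‖ := by fun_prop
  calc ∫ z, ‖z.1 - z.2‖ ∂(μ.map fun ω => (f ω, g ω))
      = ∫ ω, ‖f ω - g ω‖ ∂μ := integral_map (hf.prodMk hg) hnorm.measurable.aestronglyMeasurable
    _ ≤ ‖∫ ω, ‖f ω - g ω‖ ∂μ‖ := Real.le_norm_self _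
    _ ≤ C * μ.real Set.univ :=
      norm_integral_le_of_norm_le_const (by simpa only [norm_norm] using hC)

theorem hmc_one_step_contraction_general {P : Type*} [MeasurableSpace P] {β : NNReal}
    {Q : E × P → E} {G : Measure P} [IsProbabilityMeasure G]
    (hQ : ∀ q, AEMeasurable (fun p => Q (q, p)) G)
    (hlip : ∀ᵐ p ∂G, LipschitzWith β fun q => Q (q, p)) (q₁ q₂ : E) :
    (∃ γ : Measure (E × E), IsCoupling γ (hmcLaw Q G q₁) (hmcLaw Q G q₂) ∧
      ∫ z, ‖z.1 - z.2‖ ∂γ ≤ β * ‖q₁ - q₂‖) ∧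
    wassersteinW1 (hmcLaw Q G q₁) (hmcLaw Q G q₂) ≤ β * ‖q₁ - q₂‖ ∧
    (q₁ ≠ q₂ → 1 - β ≤ coarseRicciCurvature (hmcLaw Q G) q₁ q₂) := by
  have hcoupling := isCoupling_map_prodMk (hQ q₁) (hQ q₂)
  have hcost : ∫ z, ‖z.1 - z.2‖ ∂(G.map fun p => (Q (q₁, p), Q (q₂, p))) ≤ β * ‖q₁ - q₂‖ := by
    simpa only [probReal_univ, mul_one] using
      integral_norm_sub_map_prodMk_le (hQ q₁) (hQ q₂) (hlip.mono fun p hp => hp.norm_sub_le q₁ q₂)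
  have hW := hcoupling.wassersteinW1_le.trans hcost
  exact ⟨⟨_, hcoupling, hcost⟩, hW, fun hne => one_sub_le_coarseRicciCurvature hne hW⟩

end Contraction

/-- If `q ↦ Q(q,p)` is differentiable with derivative of operator norm at
most `β < 1` everywhere, then for all `q₁, q₂` there is a coupling `γ` of the one-step HMC
laws `μ(q₁)`, `μ(q₂)` with `∫ ‖x − y‖ dγ ≤ β ‖q₁ − q₂‖`; in particular
`W₁(μ(q₁), μ(q₂)) ≤ β ‖q₁ − q₂‖` and the coarse Ricci curvature is at least `1 − β`. -/
theorem hmc_one_step_contraction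
    (m : ℕ) (hm : 1 ≤ m) (β : ℝ) (hβ0 : 0 < β) (hβ1 : β < 1)
    (Q : EuclideanSpace ℝ (Fin m) × EuclideanSpace ℝ (Fin m) → EuclideanSpace ℝ (Fin m))
    (hQ : Measurable Q)
    (G : Measure (EuclideanSpace ℝ (Fin m))) [IsProbabilityMeasure G]
    (hdiff : ∀ p q : EuclideanSpace ℝ (Fin m),
      DifferentiableAt ℝ (fun q' => Q (q', p)) q)
    (hder : ∀ p q : EuclideanSpace ℝ (Fin m),
      ‖fderiv ℝ (fun q' => Q (q', p)) q‖ ≤ β)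
    (q₁ q₂ : EuclideanSpace ℝ (Fin m)) :
    (∃ γ : Measure (EuclideanSpace ℝ (Fin m) × EuclideanSpace ℝ (Fin m)),
      γ.map Prod.fst = G.map (fun p => Q (q₁, p)) ∧
      γ.map Prod.snd = G.map (fun p => Q (q₂, p)) ∧
      (∫ z, ‖z.1 - z.2‖ ∂γ) ≤ β * ‖q₁ - q₂‖) ∧
    wassersteinW1 (G.map fun p => Q (q₁, p)) (G.map fun p => Q (q₂, p)) ≤ β * ‖q₁ - q₂‖ ∧
    (q₁ ≠ q₂ →
      1 - β ≤ 1 -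
        wassersteinW1 (G.map fun p => Q (q₁, p)) (G.map fun p => Q (q₂, p)) / ‖q₁ - q₂‖) := by
  lift β to NNReal using hβ0.le
  simpa only [IsCoupling, hmcLaw, coarseRicciCurvature, and_assoc] using
    hmc_one_step_contraction_general (fun q => (hQ.comp measurable_prodMk_left).aemeasurable)
      (.of_forall fun p => lipschitzWith_of_nnnorm_fderiv_le (hdiff p) (hder p)) q₁ q₂
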